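/- arXiv:alg-geom/9612008 — 4 statements merged into one kernel-verified Lean document; each statement's English description precedes it below -/
import Mathlib

section
/- Existence of S¹-invariant configurations, SU case: for every k ≥ 1 there exist b₀ ∈ M_{k×2k}(ℂ) and c₀ ∈ M_{2k×k}(ℂ) such that b₀c₀ = 0, c₀ is injective, b₀ is surjective, and the S⁴-configuration (0, 0, b₀, c₀) (with a₁ = a₂ = 0, n = 2k) is integrable and nondegenerate. -/
open Matrix

/-- The monad map `A(x)` of an `S⁴`-configuration `(a₁, a₂, b, c)`, with the `ℂⁿ` factor
indexed by an arbitrary finite type `N`. -/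
noncomputable def monadA {k : ℕ} {N : Type} [Fintype N]
    (a₁ a₂ : Matrix (Fin k) (Fin k) ℂ) (c : Matrix N (Fin k) ℂ) (x : ℂ × ℂ × ℂ) :
    Matrix ((Fin k ⊕ Fin k) ⊕ N) (Fin k) ℂ :=
  Matrix.fromRows
    (Matrix.fromRows (x.1 • (1 : Matrix (Fin k) (Fin k) ℂ) - x.2.2 • a₁)
      (x.2.1 • (1 : Matrix (Fin k) (Fin k) ℂ) - x.2.2 • a₂))
    (x.2.2 • c)

/-- The monad map `B(x)` of an `S⁴`-configuration `(a₁, a₂, b, c)`, with the `ℂⁿ` factor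
indexed by an arbitrary finite type `N`. -/
noncomputable def monadB {k : ℕ} {N : Type} [Fintype N]
    (a₁ a₂ : Matrix (Fin k) (Fin k) ℂ) (b : Matrix (Fin k) N ℂ) (x : ℂ × ℂ × ℂ) :
    Matrix (Fin k) ((Fin k ⊕ Fin k) ⊕ N) ℂ :=
  Matrix.fromCols
    (Matrix.fromCols (-(x.2.1 • (1 : Matrix (Fin k) (Fin k) ℂ)) + x.2.2 • a₂)
      (x.1 • (1 : Matrix (Fin k) (Fin k) ℂ) - x.2.2 • a₁))
    (x.2.2 • b)

/-- Existence of `S¹`-invariant configurations, `SU` case: for every `k ≥ 1` there exist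
`b₀ ∈ M_{k×2k}(ℂ)` and `c₀ ∈ M_{2k×k}(ℂ)` with `b₀c₀ = 0`, `c₀` injective, `b₀`
surjective, such that the `S⁴`-configuration `(0, 0, b₀, c₀)` (with `n = 2k`) is
integrable and nondegenerate. -/
theorem exists_S1_invariant_SU_configuration {k : ℕ} (hk : 1 ≤ k) :
    ∃ (b₀ : Matrix (Fin k) (Fin (2 * k)) ℂ) (c₀ : Matrix (Fin (2 * k)) (Fin k) ℂ),
      b₀ * c₀ = 0 ∧
      Function.Injective c₀.mulVec ∧
      Function.Surjective b₀.mulVec ∧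
      ((0 : Matrix (Fin k) (Fin k) ℂ) * 0 - 0 * 0 + b₀ * c₀ = 0) ∧
      (∀ x : ℂ × ℂ × ℂ, x ≠ 0 →
        Function.Injective (monadA (0 : Matrix (Fin k) (Fin k) ℂ) 0 c₀ x).mulVec ∧
        Function.Surjective (monadB (0 : Matrix (Fin k) (Fin k) ℂ) 0 b₀ x).mulVec) := by
  have inj : ∀ {m : Type} [Fintype m] (A : Matrix m (Fin k) ℂ) (L : Matrix (Fin k) m ℂ),
      L * A = 1 → Function.Injective A.mulVec := by
    intro m _ A L h u v huv
    have h2 := congrArg L.mulVec huv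
    simpa [Matrix.mulVec_mulVec, h] using h2
  have surj : ∀ {m : Type} [Fintype m] (B : Matrix (Fin k) m ℂ) (R : Matrix m (Fin k) ℂ),
      B * R = 1 → Function.Surjective B.mulVec := by
    intro m _ B R h v
    exact ⟨R.mulVec v, by simp [Matrix.mulVec_mulVec, h]⟩
  obtain ⟨b, c, b', c', h0, hb, hc⟩ : ∃ (b : Matrix (Fin k) (Fin (2 * k)) ℂ)
      (c : Matrix (Fin (2 * k)) (Fin k) ℂ) (b' : Matrix (Fin (2 * k)) (Fin k) ℂ)
      (c' : Matrix (Fin k) (Fin (2 * k)) ℂ), b * c = 0 ∧ b * b' = 1 ∧ c' * c = 1 := by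
    let e : Fin (2 * k) ≃ Fin k ⊕ Fin k := (finCongr (two_mul k)).trans finSumFinEquiv.symm
    refine ⟨(Matrix.fromCols 0 1).submatrix id e, (Matrix.fromRows 1 0).submatrix e id,
      (Matrix.fromRows 0 1).submatrix e id, (Matrix.fromCols 1 0).submatrix id e, ?_, ?_, ?_⟩ <;>
    · rw [Matrix.submatrix_mul_equiv, Matrix.fromCols_mul_fromRows]
      simp
  refine ⟨b, c, h0, inj c c' hc, surj b b' hb, by simp [h0], ?_⟩
  rintro ⟨x, y, z⟩ hx
  by_cases h1 : x = 0
  · by_cases h2 : y = 0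
    · have h3 : z ≠ 0 := by
        rintro rfl
        exact hx (by simp [h1, h2])
      exact ⟨inj _ (Matrix.fromCols (Matrix.fromCols 0 0) (z⁻¹ • c'))
          (by simp [monadA, Matrix.fromCols_mul_fromRows, hc, smul_smul, h3]),
        surj _ (Matrix.fromRows (Matrix.fromRows 0 0) (z⁻¹ • b'))
          (by simp [monadB, Matrix.fromCols_mul_fromRows, hb, smul_smul, h3])⟩
    · exact ⟨inj _ (Matrix.fromCols (Matrix.fromCols 0 (y⁻¹ • 1)) 0)
          (by simp [monadA, Matrix.fromCols_mul_fromRows, smul_smul, h2]),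
        surj _ (Matrix.fromRows (Matrix.fromRows (-(y⁻¹ • 1)) 0) 0)
          (by simp [monadB, Matrix.fromCols_mul_fromRows, smul_smul, h2])⟩
  · exact ⟨inj _ (Matrix.fromCols (Matrix.fromCols (x⁻¹ • 1) 0) 0)
        (by simp [monadA, Matrix.fromCols_mul_fromRows, smul_smul, h1]),
      surj _ (Matrix.fromRows (Matrix.fromRows 0 (x⁻¹ • 1)) 0)
        (by simp [monadB, Matrix.fromCols_mul_fromRows, smul_smul, h1])⟩
end

section
/- The stabilization homotopy stays inside the configuration space: let (a₁, a₂, b, c) be an integrable nondegenerate SU(n) S⁴-configuration of charge k, and let b₀ ∈ M_{k×2k}(ℂ), c₀ ∈ M_{2k×k}(ℂ) satisfy b₀c₀ = 0 with c₀ injective and b₀ surjective. Then for every t ∈ [0,1], the tuple H_t(a₁,a₂,b,c) = ((1−t)a₁, (1−t)a₂, (t·b₀ | (1−t)·b), (t·c₀ ; (1−t)·c)) is an integrable nondegenerate SU(2k+n) S⁴-configuration of charge k, where (t·b₀ | (1−t)·b) ∈ M_{k×(2k+n)}(ℂ) and (t·c₀ ; (1−t)·c) ∈ M_{(2k+n)×k}(ℂ)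 are formed by block concatenation. -/
open Matrix

/-- The stabilization homotopy stays inside the configuration space: if `(a₁,a₂,b,c)` is
an integrable nondegenerate `SU(n)` `S⁴`-configuration of charge `k`, and `b₀c₀ = 0` with
`c₀` injective and `b₀` surjective, then for every `t ∈ [0,1]` the tuple
`H_t(a₁,a₂,b,c) = ((1−t)a₁, (1−t)a₂, (t·b₀ | (1−t)·b), (t·c₀ ; (1−t)·c))` is an
integrable nondegenerate `SU(2k+n)` `S⁴`-configuration of charge `k`. -/
theorem stabilization_homotopy_stays_in_configurations {k n : ℕ}
    (a₁ a₂ : Matrix (Fin k) (Fin k) ℂ)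
    (b : Matrix (Fin k) (Fin n) ℂ) (c : Matrix (Fin n) (Fin k) ℂ)
    (b₀ : Matrix (Fin k) (Fin (2 * k)) ℂ) (c₀ : Matrix (Fin (2 * k)) (Fin k) ℂ)
    (hint : a₁ * a₂ - a₂ * a₁ + b * c = 0)
    (hnd : ∀ x : ℂ × ℂ × ℂ, x ≠ 0 →
      Function.Injective (monadA a₁ a₂ c x).mulVec ∧
      Function.Surjective (monadB a₁ a₂ b x).mulVec)
    (hb₀c₀ : b₀ * c₀ = 0)
    (hc₀ : Function.Injective c₀.mulVec)
    (hb₀ : Function.Surjective b₀.mulVec)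
    (t : ℝ) (ht0 : 0 ≤ t) (ht1 : t ≤ 1) :
    ((((1 - t : ℝ) : ℂ) • a₁) * (((1 - t : ℝ) : ℂ) • a₂) -
        (((1 - t : ℝ) : ℂ) • a₂) * (((1 - t : ℝ) : ℂ) • a₁) +
        Matrix.fromCols ((t : ℂ) • b₀) (((1 - t : ℝ) : ℂ) • b) *
          Matrix.fromRows ((t : ℂ) • c₀) (((1 - t : ℝ) : ℂ) • c) = 0) ∧
    (∀ x : ℂ × ℂ × ℂ, x ≠ 0 →
      Function.Injective
        (monadA (((1 - t : ℝ) : ℂ) • a₁) (((1 - t : ℝ) : ℂ) • a₂)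
          (Matrix.fromRows ((t : ℂ) • c₀) (((1 - t : ℝ) : ℂ) • c)) x).mulVec ∧
      Function.Surjective
        (monadB (((1 - t : ℝ) : ℂ) • a₁) (((1 - t : ℝ) : ℂ) • a₂)
          (Matrix.fromCols ((t : ℂ) • b₀) (((1 - t : ℝ) : ℂ) • b)) x).mulVec) := by
  have hst : ((1 - t : ℝ) : ℂ) = 1 - (t : ℂ) := by push_cast; ring
  rw [hst]
  generalize (t : ℂ) = τ
  refine ⟨?_, ?_⟩
  · rw [Matrix.fromCols_mul_fromRows]
    simp only [Matrix.smul_mul, Matrix.mul_smul, hb₀c₀, smul_zero, zero_add]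
    rw [← smul_sub, ← smul_sub, ← smul_add, ← smul_add, hint, smul_zero, smul_zero]
  · rintro ⟨x1, x2, x3⟩ hx
    obtain ⟨hA, hB⟩ := hnd _ hx
    by_cases h : x3 * τ = 0
    · have h' : x3 * (1 - τ) = x3 := by rw [mul_sub, h]; ring
      constructor
      · intro v w hvw
        apply hA
        simp only [monadA, Matrix.fromRows_mulVec, smul_smul, h'] at hvw ⊢
        have e1 : ∀ i, _ := fun i => congrFun hvw (Sum.inl i)
        have e2 : ∀ i, _ := fun i => congrFun hvw (Sum.inr (Sum.inr i))
        funext i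
        rcases i with i | i
        · exact e1 i
        · have := e2 i
          simpa [Matrix.smul_mulVec, Matrix.fromRows_mulVec, smul_smul, h', ← mul_assoc] using this
      · intro y
        obtain ⟨u, hu⟩ := hB y
        refine ⟨Sum.elim (u ∘ Sum.inl) (Sum.elim 0 (u ∘ Sum.inr)), ?_⟩
        rw [← hu]
        simp [monadB, Matrix.fromCols_mulVec, Matrix.smul_mulVec, smul_smul, h']
    · constructor
      · intro v w hvw
        apply hc₀
        simp only [monadA, Matrix.fromRows_mulVec] at hvw
        funext i
        have := congrFun hvw (Sum.inr (Sum.inl i))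
        simp [Matrix.smul_mulVec, Matrix.fromRows_mulVec] at this
        have h1 : x3 ≠ 0 := left_ne_zero_of_mul h
        have h2 : τ ≠ 0 := right_ne_zero_of_mul h
        simpa [h1, h2] using this
      · intro y
        obtain ⟨u, hu⟩ := hb₀ ((x3 * τ)⁻¹ • y)
        refine ⟨Sum.elim 0 (Sum.elim u 0), ?_⟩
        have h3 : (x3 * τ) • (b₀ *ᵥ u) = y := by rw [hu, smul_inv_smul₀ h]
        rw [← h3]
        have h0 : (Sum.elim 0 (Sum.elim u 0) : (Fin k ⊕ Fin k) ⊕ (Fin (2*k) ⊕ Fin n) → ℂ) ∘ Sum.inl = 0 := rfl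
        simp [monadB, Matrix.fromCols_mulVec, Matrix.smul_mulVec, smul_smul]
end

section
/- The rank-inclusion of SU configuration spaces on S⁴ is null-homotopic: let 𝒜(n) denote the space of integrable nondegenerate SU(n) S⁴-configurations of charge k, topologized as a subspace of M_{k×k}(ℂ)² × M_{k×n}(ℂ) × M_{n×k}(ℂ). Then the continuous inclusion ι : 𝒜(n) → 𝒜(2k+n), ι(a₁,a₂,b,c) = (a₁, a₂, (0 | b), (0 ; c)) (padding b on the left by a zero k×2k block and c on the top by a zero 2k×k block), is homotopic to a constant map. -/
open Matrix

/-- The predicate that `(a₁, a₂, b, c)` is an integrable nondegenerate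
`S⁴`-configuration. -/
def IsS4Config {k : ℕ} {N : Type} [Fintype N]
    (cfg : Matrix (Fin k) (Fin k) ℂ × Matrix (Fin k) (Fin k) ℂ ×
      Matrix (Fin k) N ℂ × Matrix N (Fin k) ℂ) : Prop :=
  cfg.1 * cfg.2.1 - cfg.2.1 * cfg.1 + cfg.2.2.1 * cfg.2.2.2 = 0 ∧
  ∀ x : ℂ × ℂ × ℂ, x ≠ 0 →
    Function.Injective (monadA cfg.1 cfg.2.1 cfg.2.2.2 x).mulVec ∧
    Function.Surjective (monadB cfg.1 cfg.2.1 cfg.2.2.1 x).mulVec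

lemma exists_blocks (k : ℕ) : ∃ (b : Matrix (Fin k) (Fin (2 * k)) ℂ)
    (c : Matrix (Fin (2 * k)) (Fin k) ℂ) (p : Matrix (Fin (2 * k)) (Fin k) ℂ)
    (q : Matrix (Fin k) (Fin (2 * k)) ℂ), b * c = 0 ∧ b * p = 1 ∧ q * c = 1 := by
  let e : Fin (2 * k) ≃ Fin k ⊕ Fin k := (finCongr (two_mul k)).trans finSumFinEquiv.symm
  refine ⟨(fromCols 1 0).submatrix id e, (fromRows 0 1).submatrix e id,
    (fromRows 1 0).submatrix e id, (fromCols 0 1).submatrix id e, ?_, ?_, ?_⟩ <;>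
  · rw [submatrix_mul_equiv, fromCols_mul_fromRows]
    simp

lemma inj_of_left {m l : Type} [Fintype m] [Fintype l] [DecidableEq l]
    (M : Matrix m l ℂ) (L : Matrix l m ℂ) (h : L * M = 1) : Function.Injective M.mulVec := by
  intro v w hvw
  have := congrArg L.mulVec hvw
  simpa [mulVec_mulVec, h] using this

lemma surj_of_right {m l : Type} [Fintype m] [Fintype l] [DecidableEq l]
    (M : Matrix l m ℂ) (L : Matrix m l ℂ) (h : M * L = 1) : Function.Surjective M.mulVec := by
  intro v
  exact ⟨L *ᵥ v, by simp [mulVec_mulVec, h]⟩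

lemma config_of_inverses {k : ℕ} {N : Type} [Fintype N]
    (a₁ a₂ : Matrix (Fin k) (Fin k) ℂ) (b : Matrix (Fin k) N ℂ) (c : Matrix N (Fin k) ℂ)
    (p : Matrix N (Fin k) ℂ) (q : Matrix (Fin k) N ℂ) (hp : b * p = 1) (hq : q * c = 1)
    (h : a₁ * a₂ - a₂ * a₁ + b * c = 0) : IsS4Config (a₁, a₂, b, c) := by
  refine ⟨h, ?_⟩
  rintro ⟨x, y, z⟩ hx
  by_cases hz : z = 0
  · subst hz
    by_cases hy : y = 0
    · subst hy
      have hx' : x ≠ 0 := by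
        rintro rfl
        exact hx rfl
      constructor
      · apply inj_of_left _ (fromCols (fromCols (x⁻¹ • 1) 0) 0)
        simp [monadA, fromCols_mul_fromRows, hx']
      · apply surj_of_right _ (fromRows (fromRows 0 (x⁻¹ • 1)) 0)
        simp [monadB, fromCols_mul_fromRows, hx']
    · constructor
      · apply inj_of_left _ (fromCols (fromCols 0 (y⁻¹ • 1)) 0)
        simp [monadA, fromCols_mul_fromRows, hy]
      · apply surj_of_right _ (fromRows (fromRows (-(y⁻¹ • 1)) 0) 0)
        simp [monadB, fromCols_mul_fromRows, hy]
  · constructor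
    · apply inj_of_left _ (fromCols 0 (z⁻¹ • q))
      simp [monadA, fromCols_mul_fromRows, hz, hq]
    · apply surj_of_right _ (fromRows 0 (z⁻¹ • p))
      simp [monadB, fromCols_mul_fromRows, hz, hp]

lemma config_pad {k : ℕ} {N P : Type} [Fintype N] [Fintype P]
    (a₁ a₂ : Matrix (Fin k) (Fin k) ℂ) (b : Matrix (Fin k) N ℂ) (c : Matrix N (Fin k) ℂ)
    (h : IsS4Config (a₁, a₂, b, c)) :
    IsS4Config (a₁, a₂, fromCols (0 : Matrix (Fin k) P ℂ) b,
      fromRows (0 : Matrix P (Fin k) ℂ) c) := by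
  obtain ⟨h1, h2⟩ := h
  refine ⟨by simpa [fromCols_mul_fromRows] using h1, fun x hx => ⟨?_, ?_⟩⟩
  · intro v w hvw
    apply (h2 x hx).1
    simp only [monadA, fromRows_mulVec, smul_mulVec] at hvw ⊢
    funext i
    rcases i with i | i
    · exact congrFun hvw (Sum.inl i)
    · simpa using congrFun hvw (Sum.inr (Sum.inr i))
  · intro v
    obtain ⟨u, rfl⟩ := (h2 x hx).2 v
    refine ⟨Sum.elim (u ∘ Sum.inl) (Sum.elim 0 (u ∘ Sum.inr)), ?_⟩
    simp only [monadB, fromCols_mulVec, smul_mulVec]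
    congr 1
    simp

/-- The rank-inclusion `ι : 𝒜(n) → 𝒜(2k+n)` of the spaces of integrable nondegenerate
`SU(n)` `S⁴`-configurations of charge `k`, `ι(a₁,a₂,b,c) = (a₁, a₂, (0 | b), (0 ; c))`,
is homotopic to a constant map: there is a continuous homotopy `H` with `H(0,·) = ι` and
`H(1,·)` constant. -/
theorem rank_inclusion_null_homotopic_S4 {k n : ℕ} (hk : 1 ≤ k) :
    ∃ H : unitInterval ×
        {cfg : Matrix (Fin k) (Fin k) ℂ × Matrix (Fin k) (Fin k) ℂ ×
          Matrix (Fin k) (Fin n) ℂ × Matrix (Fin n) (Fin k) ℂ // IsS4Config cfg} →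
        {cfg : Matrix (Fin k) (Fin k) ℂ × Matrix (Fin k) (Fin k) ℂ ×
          Matrix (Fin k) (Fin (2 * k) ⊕ Fin n) ℂ ×
          Matrix (Fin (2 * k) ⊕ Fin n) (Fin k) ℂ // IsS4Config cfg},
      Continuous H ∧
      (∀ a, (H (0, a)).val =
        (a.val.1, a.val.2.1,
          Matrix.fromCols (0 : Matrix (Fin k) (Fin (2 * k)) ℂ) a.val.2.2.1,
          Matrix.fromRows (0 : Matrix (Fin (2 * k)) (Fin k) ℂ) a.val.2.2.2)) ∧
      (∃ c₀, ∀ a, H (1, a) = c₀) := by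
  obtain ⟨b₀, c₀, p, q, h0, hp, hq⟩ := exists_blocks k
  let F : unitInterval × {cfg : Matrix (Fin k) (Fin k) ℂ × Matrix (Fin k) (Fin k) ℂ ×
          Matrix (Fin k) (Fin n) ℂ × Matrix (Fin n) (Fin k) ℂ // IsS4Config cfg} →
        Matrix (Fin k) (Fin k) ℂ × Matrix (Fin k) (Fin k) ℂ ×
          Matrix (Fin k) (Fin (2 * k) ⊕ Fin n) ℂ ×
          Matrix (Fin (2 * k) ⊕ Fin n) (Fin k) ℂ := fun z =>
    ((1 - ((z.1 : ℝ) : ℂ)) • z.2.val.1, (1 - ((z.1 : ℝ) : ℂ)) • z.2.val.2.1,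
      fromCols (((z.1 : ℝ) : ℂ) • b₀) ((1 - ((z.1 : ℝ) : ℂ)) • z.2.val.2.2.1),
      fromRows (((z.1 : ℝ) : ℂ) • c₀) ((1 - ((z.1 : ℝ) : ℂ)) • z.2.val.2.2.2))
  have hF0 : ∀ a, F (0, a) = (a.val.1, a.val.2.1,
          Matrix.fromCols (0 : Matrix (Fin k) (Fin (2 * k)) ℂ) a.val.2.2.1,
          Matrix.fromRows (0 : Matrix (Fin (2 * k)) (Fin k) ℂ) a.val.2.2.2) := by
    intro a
    simp [F]
  have hF : ∀ z, IsS4Config (F z) := by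
    rintro ⟨t, a⟩
    by_cases ht : t = 0
    · subst ht
      rw [hF0]
      exact config_pad _ _ _ _ a.2
    · have ht' : ((t : ℝ) : ℂ) ≠ 0 := by
        simpa using ht
      have ha := a.2.1
      refine config_of_inverses _ _ _ _ (fromRows (((t : ℝ) : ℂ)⁻¹ • p) 0)
        (fromCols (((t : ℝ) : ℂ)⁻¹ • q) 0) ?_ ?_ ?_
      · generalize ((t : ℝ) : ℂ) = s at ht' ⊢
        simp [fromCols_mul_fromRows, hp, ht']
      · generalize ((t : ℝ) : ℂ) = s at ht' ⊢
        simp [fromCols_mul_fromRows, hq, ht']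
      · simp only [fromCols_mul_fromRows, Matrix.smul_mul, Matrix.mul_smul, h0, smul_zero, zero_add]
        rw [← smul_sub, ← smul_add, ← smul_sub, ← smul_add, ha, smul_zero, smul_zero]
  refine ⟨fun z => ⟨F z, hF z⟩, ?_, hF0, ?_⟩
  · refine Continuous.subtype_mk ?_ _
    have hs : Continuous fun z : unitInterval × {cfg : Matrix (Fin k) (Fin k) ℂ ×
        Matrix (Fin k) (Fin k) ℂ × Matrix (Fin k) (Fin n) ℂ ×
        Matrix (Fin n) (Fin k) ℂ // IsS4Config cfg} => ((z.1 : ℝ) : ℂ) := by fun_prop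
    refine (Continuous.prodMk ?_ (Continuous.prodMk ?_ (Continuous.prodMk ?_ ?_)))
    · fun_prop
    · fun_prop
    · refine continuous_matrix fun i j => ?_
      rcases j with j | j
      · simp only [fromCols_apply_inl, Matrix.smul_apply]
        fun_prop
      · simp only [fromCols_apply_inr]
        exact Continuous.matrix_elem (by fun_prop) i j
    · refine continuous_matrix fun i j => ?_
      rcases i with i | i
      · simp only [fromRows_apply_inl, Matrix.smul_apply]
        fun_prop
      · simp only [fromRows_apply_inr]
        exact Continuous.matrix_elem (by fun_prop) i j
  · have hc : IsS4Config ((0, 0, fromCols b₀ 0, fromRows c₀ 0) :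
        Matrix (Fin k) (Fin k) ℂ × Matrix (Fin k) (Fin k) ℂ ×
          Matrix (Fin k) (Fin (2 * k) ⊕ Fin n) ℂ ×
          Matrix (Fin (2 * k) ⊕ Fin n) (Fin k) ℂ) := by
      refine config_of_inverses _ _ _ _ (fromRows p 0) (fromCols q 0) ?_ ?_ ?_ <;>
        simp [fromCols_mul_fromRows, hp, hq, h0]
    refine ⟨⟨_, hc⟩, fun a => Subtype.ext ?_⟩
    simp [F]
end

section
/- The rank-inclusion of SU configuration spaces on ℂP̄² is null-homotopic: let 𝒜(n) denote the space of integrable nondegenerate SU(n) ℂP̄²-configurations of charge k, topologized as a subspace of M_{k×k}(ℂ)³ × M_{k×n}(ℂ) × M_{n×k}(ℂ). Then the continuous inclusion ι : 𝒜(n) → 𝒜(2k+n), ι(a₁,a₂,x,b,c) = (a₁, a₂, x, (0 | b), (0 ; c)) (padding b on the left by a zero k×2k block and c on the top by a zero 2k×k block), is homotopic to a constant map. -/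
open Matrix

/-- The monad map `A(p,q)` of a `ℂP̄²`-configuration `(a₁, a₂, x, b, c)`, with the `ℂⁿ`
factor indexed by an arbitrary finite type `N`. -/
noncomputable def cpbarA {k : ℕ} {N : Type} [Fintype N] (a₁ a₂ x : Matrix (Fin k) (Fin k) ℂ)
    (c : Matrix N (Fin k) ℂ) (p : ℂ × ℂ × ℂ) (q : ℂ × ℂ) :
    Matrix (((Fin k ⊕ Fin k) ⊕ (Fin k ⊕ Fin k)) ⊕ N) (Fin k ⊕ Fin k) ℂ :=
  Matrix.fromCols
    (Matrix.fromRows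
      (Matrix.fromRows
        (Matrix.fromRows (p.2.2 • a₁)
          (p.1 • (1 : Matrix (Fin k) (Fin k) ℂ) - p.2.2 • (x * a₁)))
        (Matrix.fromRows (p.2.2 • a₂)
          (p.2.1 • (1 : Matrix (Fin k) (Fin k) ℂ) - p.2.2 • (x * a₂))))
      (p.2.2 • c))
    (Matrix.fromRows
      (Matrix.fromRows
        (Matrix.fromRows (-(q.2 • (1 : Matrix (Fin k) (Fin k) ℂ))) (0 : Matrix (Fin k) (Fin k) ℂ))
        (Matrix.fromRows (q.1 • (1 : Matrix (Fin k) (Fin k) ℂ)) (0 : Matrix (Fin k) (Fin k) ℂ)))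
      (0 : Matrix N (Fin k) ℂ))

/-- The monad map `B(p,q)` of a `ℂP̄²`-configuration `(a₁, a₂, x, b, c)`, with the `ℂⁿ`
factor indexed by an arbitrary finite type `N`. -/
noncomputable def cpbarB {k : ℕ} {N : Type} [Fintype N] (a₁ a₂ x : Matrix (Fin k) (Fin k) ℂ)
    (b : Matrix (Fin k) N ℂ) (p : ℂ × ℂ × ℂ) (q : ℂ × ℂ) :
    Matrix (Fin k ⊕ Fin k) (((Fin k ⊕ Fin k) ⊕ (Fin k ⊕ Fin k)) ⊕ N) ℂ :=
  Matrix.fromRows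
    (Matrix.fromCols
      (Matrix.fromCols
        (Matrix.fromCols (p.2.1 • (1 : Matrix (Fin k) (Fin k) ℂ)) (p.2.2 • a₂))
        (Matrix.fromCols (-(p.1 • (1 : Matrix (Fin k) (Fin k) ℂ))) (-(p.2.2 • a₁))))
      (p.2.2 • b))
    (Matrix.fromCols
      (Matrix.fromCols
        (Matrix.fromCols (q.1 • x) (q.1 • (1 : Matrix (Fin k) (Fin k) ℂ)))
        (Matrix.fromCols (q.2 • x) (q.2 • (1 : Matrix (Fin k) (Fin k) ℂ))))
      (0 : Matrix (Fin k) N ℂ))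

/-- The predicate that `(a₁, a₂, x, b, c)` is an integrable nondegenerate
`ℂP̄²`-configuration. -/
def IsCpbarConfig {k : ℕ} {N : Type} [Fintype N]
    (cfg : Matrix (Fin k) (Fin k) ℂ × Matrix (Fin k) (Fin k) ℂ ×
      Matrix (Fin k) (Fin k) ℂ × Matrix (Fin k) N ℂ × Matrix N (Fin k) ℂ) : Prop :=
  cfg.1 * cfg.2.2.1 * cfg.2.1 - cfg.2.1 * cfg.2.2.1 * cfg.1 +
    cfg.2.2.2.1 * cfg.2.2.2.2 = 0 ∧
  ∀ (p : ℂ × ℂ × ℂ) (q : ℂ × ℂ), p ≠ 0 → q ≠ 0 → p.1 * q.1 + p.2.1 * q.2 = 0 →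
    Function.Injective (cpbarA cfg.1 cfg.2.1 cfg.2.2.1 cfg.2.2.2.2 p q).mulVec ∧
    Function.Surjective (cpbarB cfg.1 cfg.2.1 cfg.2.2.1 cfg.2.2.2.1 p q).mulVec

theorem aux_A_eq {k : ℕ} {N : Type} [Fintype N] (a₁ a₂ x : Matrix (Fin k) (Fin k) ℂ)
    (c : Matrix N (Fin k) ℂ) (p : ℂ × ℂ × ℂ) (q : ℂ × ℂ) (w : Fin k ⊕ Fin k → ℂ) :
    (cpbarA a₁ a₂ x c p q).mulVec w = 0 ↔
      (p.2.2 • (a₁ *ᵥ (w ∘ Sum.inl)) - q.2 • (w ∘ Sum.inr) = 0 ∧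
       p.1 • (w ∘ Sum.inl) - p.2.2 • ((x * a₁) *ᵥ (w ∘ Sum.inl)) = 0) ∧
      (p.2.2 • (a₂ *ᵥ (w ∘ Sum.inl)) + q.1 • (w ∘ Sum.inr) = 0 ∧
       p.2.1 • (w ∘ Sum.inl) - p.2.2 • ((x * a₂) *ᵥ (w ∘ Sum.inl)) = 0) ∧
      p.2.2 • (c *ᵥ (w ∘ Sum.inl)) = 0 := by
  unfold cpbarA
  simp only [fromCols_mulVec, fromRows_mulVec, sub_mulVec, smul_mulVec, neg_mulVec, one_mulVec,
    zero_mulVec, funext_iff, Sum.forall, Pi.add_apply, Sum.elim_inl, Sum.elim_inr, Pi.zero_apply,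
    Pi.sub_apply, Pi.neg_apply, Pi.smul_apply, add_zero, and_assoc, ← sub_eq_add_neg]

theorem aux_B_eq {k : ℕ} {N : Type} [Fintype N] (a₁ a₂ x : Matrix (Fin k) (Fin k) ℂ)
    (b : Matrix (Fin k) N ℂ) (p : ℂ × ℂ × ℂ) (q : ℂ × ℂ) (u₁ u₂ u₃ u₄ : Fin k → ℂ) (v : N → ℂ) :
    (cpbarB a₁ a₂ x b p q).mulVec (Sum.elim (Sum.elim (Sum.elim u₁ u₂) (Sum.elim u₃ u₄)) v) =
      Sum.elim
        (p.2.1 • u₁ + p.2.2 • (a₂ *ᵥ u₂) + (-(p.1 • u₃) + -(p.2.2 • (a₁ *ᵥ u₄))) + p.2.2 • (b *ᵥ v))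
        (q.1 • (x *ᵥ u₁) + q.1 • u₂ + (q.2 • (x *ᵥ u₃) + q.2 • u₄)) := by
  unfold cpbarB
  simp only [fromCols_mulVec, fromRows_mulVec, smul_mulVec, neg_mulVec, one_mulVec,
    zero_mulVec, Sum.elim_comp_inl, Sum.elim_comp_inr, add_zero]

theorem aux_inj {k : ℕ} {N : Type} [Fintype N] {M : Matrix N (Fin k ⊕ Fin k) ℂ}
    (h : ∀ w, M *ᵥ w = 0 → w = 0) : Function.Injective M.mulVec := by
  intro u v huv
  have := h (u - v) (by rw [mulVec_sub]; exact sub_eq_zero.2 huv)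
  exact sub_eq_zero.1 this

theorem aux_nondeg {k : ℕ} {N : Type} [Fintype N] (a₁ a₂ x : Matrix (Fin k) (Fin k) ℂ)
    (b : Matrix (Fin k) N ℂ) (c : Matrix N (Fin k) ℂ)
    (hb : Function.Surjective b.mulVec) (hc : ∀ u, c *ᵥ u = 0 → u = 0)
    (p : ℂ × ℂ × ℂ) (q : ℂ × ℂ) (hp : p ≠ 0) (hq : q ≠ 0) :
    Function.Injective (cpbarA a₁ a₂ x c p q).mulVec ∧
    Function.Surjective (cpbarB a₁ a₂ x b p q).mulVec := by
  obtain ⟨x₁, x₂, x₃⟩ := p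
  obtain ⟨y₁, y₂⟩ := q
  have hp' : x₃ = 0 → x₁ = 0 → x₂ = 0 → False := by
    rintro rfl rfl rfl; exact hp rfl
  have hq' : y₁ = 0 → y₂ = 0 → False := by
    rintro rfl rfl; exact hq rfl
  constructor
  · apply aux_inj
    intro w hw
    rw [aux_A_eq] at hw
    obtain ⟨⟨h1, h2⟩, ⟨h3, h4⟩, h5⟩ := hw
    dsimp only at h1 h2 h3 h4 h5
    have hu : w ∘ Sum.inl = 0 := by
      by_cases h : x₃ = 0
      · subst h
        simp only [zero_smul, sub_zero, smul_eq_zero] at h2 h4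
        tauto
      · exact hc _ ((smul_eq_zero.1 h5).resolve_left h)
    have hv : w ∘ Sum.inr = 0 := by
      rw [hu] at h1 h3
      simp only [mulVec_zero, smul_zero, zero_sub, zero_add, neg_eq_zero, smul_eq_zero] at h1 h3
      tauto
    rw [← Sum.elim_comp_inl_inr w, hu, hv]
    ext i; cases i <;> rfl
  · intro z
    -- solve the first row with `u₁, u₃, v`, correct by `u₂, u₄`
    obtain ⟨e₁, e₂, he⟩ : ∃ e₁ e₂ : ℂ, y₁ * e₁ + y₂ * e₂ = 1 := by
      by_cases h : y₁ = 0
      · exact ⟨0, y₂⁻¹, by rw [mul_inv_cancel₀ (fun h' => hq' h h')]; ring⟩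
      · exact ⟨y₁⁻¹, 0, by rw [mul_inv_cancel₀ h]; ring⟩
    by_cases h : x₃ = 0
    · obtain ⟨f₁, f₂, hf⟩ : ∃ f₁ f₂ : ℂ, x₂ * f₁ - x₁ * f₂ = 1 := by
        by_cases h' : x₂ = 0
        · exact ⟨0, -x₁⁻¹, by
            rw [mul_neg, mul_inv_cancel₀ (fun h'' => hp' h h'' h')]; ring⟩
        · exact ⟨x₂⁻¹, 0, by rw [mul_inv_cancel₀ h']; ring⟩
      let r : Fin k → ℂ := z ∘ Sum.inr - (y₁ • (x *ᵥ (f₁ • (z ∘ Sum.inl))) +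
        y₂ • (x *ᵥ (f₂ • (z ∘ Sum.inl))))
      refine ⟨Sum.elim (Sum.elim (Sum.elim (f₁ • (z ∘ Sum.inl)) (e₁ • r))
        (Sum.elim (f₂ • (z ∘ Sum.inl)) (e₂ • r))) 0, ?_⟩
      rw [aux_B_eq]
      subst h
      ext i
      rcases i with i | i
      · simp only [zero_smul, Sum.elim_inl, Pi.add_apply, Pi.neg_apply, Pi.smul_apply,
          Pi.zero_apply, smul_eq_mul, Function.comp]
        linear_combination z (Sum.inl i) * hf
      · have hr : r i = z (Sum.inr i) - (y₁ * (x *ᵥ (f₁ • (z ∘ Sum.inl))) i +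
          y₂ * (x *ᵥ (f₂ • (z ∘ Sum.inl))) i) := rfl
        simp only [Sum.elim_inr, Pi.add_apply, Pi.smul_apply, smul_eq_mul] at hr ⊢
        linear_combination (r i) * he + hr
    · obtain ⟨v, hv⟩ := hb (x₃⁻¹ • (z ∘ Sum.inl - (x₃ • (a₂ *ᵥ (e₁ • (z ∘ Sum.inr))) +
        -(x₃ • (a₁ *ᵥ (e₂ • (z ∘ Sum.inr)))))))
      refine ⟨Sum.elim (Sum.elim (Sum.elim 0 (e₁ • (z ∘ Sum.inr)))
        (Sum.elim 0 (e₂ • (z ∘ Sum.inr)))) v, ?_⟩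
      rw [aux_B_eq]
      dsimp only at hv ⊢
      rw [hv, smul_inv_smul₀ h]
      ext i
      rcases i with i | i
      · simp
      · simp
        linear_combination z (Sum.inr i) * he

theorem aux_pad {k n : ℕ} {M : Type} [Fintype M] (a₁ a₂ x : Matrix (Fin k) (Fin k) ℂ)
    (b : Matrix (Fin k) (Fin n) ℂ) (c : Matrix (Fin n) (Fin k) ℂ)
    (b' : Matrix (Fin k) M ℂ) (c' : Matrix M (Fin k) ℂ)
    (p : ℂ × ℂ × ℂ) (q : ℂ × ℂ)
    (h : Function.Injective (cpbarA a₁ a₂ x c p q).mulVec ∧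
      Function.Surjective (cpbarB a₁ a₂ x b p q).mulVec) :
    Function.Injective (cpbarA a₁ a₂ x (fromRows c' c) p q).mulVec ∧
    Function.Surjective (cpbarB a₁ a₂ x (fromCols b' b) p q).mulVec := by
  obtain ⟨hA, hB⟩ := h
  constructor
  · apply aux_inj
    intro w hw
    apply hA
    rw [mulVec_zero, aux_A_eq]
    rw [aux_A_eq] at hw
    refine ⟨hw.1, hw.2.1, ?_⟩
    have := hw.2.2
    rw [fromRows_mulVec] at this
    ext i
    exact congrFun this (Sum.inr i)
  · intro z
    obtain ⟨w, hw⟩ := hB z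
    have e : w = Sum.elim (Sum.elim (Sum.elim (fun i => w (.inl (.inl (.inl i))))
      (fun i => w (.inl (.inl (.inr i))))) (Sum.elim (fun i => w (.inl (.inr (.inl i))))
      (fun i => w (.inl (.inr (.inr i)))))) (fun i => w (.inr i)) := by
      ext i
      rcases i with ((i | i) | (i | i)) | i <;> rfl
    rw [e, aux_B_eq] at hw
    refine ⟨Sum.elim (Sum.elim (Sum.elim (fun i => w (.inl (.inl (.inl i))))
      (fun i => w (.inl (.inl (.inr i))))) (Sum.elim (fun i => w (.inl (.inr (.inl i))))
      (fun i => w (.inl (.inr (.inr i)))))) (Sum.elim 0 (fun i => w (.inr i))), ?_⟩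
    rw [aux_B_eq, fromCols_mulVec]
    simpa using hw

/-- left identity block -/
def auxb (k : ℕ) : Matrix (Fin k) (Fin (2 * k)) ℂ :=
  Matrix.of fun i j => if (j : ℕ) = i then 1 else 0

/-- lower identity block -/
def auxc (k : ℕ) : Matrix (Fin (2 * k)) (Fin k) ℂ :=
  Matrix.of fun j i => if (j : ℕ) = k + i then 1 else 0

theorem auxb_mul_auxc (k : ℕ) : auxb k * auxc k = 0 := by
  ext i j
  rw [Matrix.mul_apply]
  apply Finset.sum_eq_zero
  intro l _
  simp only [auxb, auxc, Matrix.of_apply]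
  have := i.2
  split_ifs <;> first | omega | simp

theorem auxb_surj (k : ℕ) (z : Fin k → ℂ) : ∃ v, auxb k *ᵥ v = z := by
  refine ⟨fun j => if h : (j : ℕ) < k then z ⟨j, h⟩ else 0, ?_⟩
  ext i
  simp only [Matrix.mulVec, dotProduct]
  rw [Finset.sum_eq_single ⟨i, by omega⟩]
  · simp [auxb]
  · intro j _ hj
    have : (j : ℕ) ≠ i := fun h => hj (Fin.ext h)
    simp [auxb, this]
  · simp

theorem auxc_inj (k : ℕ) (u : Fin k → ℂ) (h : auxc k *ᵥ u = 0) : u = 0 := by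
  ext i
  have := congrFun h ⟨k + i, by omega⟩
  simp only [Matrix.mulVec, dotProduct] at this
  rw [Finset.sum_eq_single i] at this
  · simpa [auxc] using this
  · intro j _ hj
    have : (i : ℕ) ≠ j := fun h => hj (Fin.ext h.symm)
    simp [auxc, this]
  · simp

theorem aux_config {k n : ℕ} (a₁ a₂ x : Matrix (Fin k) (Fin k) ℂ)
    (b : Matrix (Fin k) (Fin n) ℂ) (c : Matrix (Fin n) (Fin k) ℂ)
    (h : IsCpbarConfig (a₁, a₂, x, b, c)) (t : ℂ) :
    IsCpbarConfig ((1 - t) • a₁, (1 - t) • a₂, (1 - t) • x,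
      fromCols (t • auxb k) ((1 - t) ^ 2 • b), fromRows (t • auxc k) ((1 - t) • c)) := by
  obtain ⟨h1, h2⟩ := h
  refine ⟨?_, ?_⟩
  · have e : (1 - t) ^ 3 • (a₁ * x * a₂ - a₂ * x * a₁ + b * c) = 0 := by
      rw [show a₁ * x * a₂ - a₂ * x * a₁ + b * c = 0 from h1, smul_zero]
    rw [← e]
    simp only [fromCols_mul_fromRows, Matrix.smul_mul, Matrix.mul_smul, auxb_mul_auxc, smul_zero,
      zero_add, smul_smul, smul_add, smul_sub]
    ring_nf
  · intro p q hp hq hpq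
    by_cases ht : t = 0
    · subst ht
      have := aux_pad a₁ a₂ x b c ((0 : ℂ) • auxb k) ((0 : ℂ) • auxc k) p q (h2 p q hp hq hpq)
      simpa using this
    · apply aux_nondeg _ _ _ _ _ _ _ p q hp hq
      · intro z
        obtain ⟨v, hv⟩ := auxb_surj k (t⁻¹ • z)
        refine ⟨Sum.elim v 0, ?_⟩
        dsimp only
        rw [fromCols_mulVec]
        simp [smul_mulVec, hv, ht]
      · intro u hu
        dsimp only at hu
        rw [fromRows_mulVec] at hu
        apply auxc_inj
        have : (t • auxc k) *ᵥ u = 0 := by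
          ext i
          exact congrFun hu (Sum.inl i)
        rw [smul_mulVec] at this
        exact (smul_eq_zero.1 this).resolve_left ht

theorem aux_fromCols_cont {X A B C : Type*} [TopologicalSpace X] {f : X → Matrix A B ℂ}
    {g : X → Matrix A C ℂ} (hf : Continuous f) (hg : Continuous g) :
    Continuous fun y => fromCols (f y) (g y) := by
  refine continuous_matrix ?_
  rintro i (j | j)
  · exact hf.matrix_elem i j
  · exact hg.matrix_elem i j

theorem aux_fromRows_cont {X A B C : Type*} [TopologicalSpace X] {f : X → Matrix B A ℂ}
    {g : X → Matrix C A ℂ} (hf : Continuous f) (hg : Continuous g) :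
    Continuous fun y => fromRows (f y) (g y) := by
  refine continuous_matrix ?_
  rintro (j | j) i
  · exact hf.matrix_elem j i
  · exact hg.matrix_elem j i

/-- The rank-inclusion `ι : 𝒜(n) → 𝒜(2k+n)` of the spaces of integrable nondegenerate
`SU(n)` `ℂP̄²`-configurations of charge `k`,
`ι(a₁,a₂,x,b,c) = (a₁, a₂, x, (0 | b), (0 ; c))`, is homotopic to a constant map:
there is a continuous homotopy `H` with `H(0,·) = ι` and `H(1,·)` constant. -/
theorem rank_inclusion_null_homotopic_cpbar {k n : ℕ} (hk : 1 ≤ k) :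
    ∃ H : unitInterval ×
        {cfg : Matrix (Fin k) (Fin k) ℂ × Matrix (Fin k) (Fin k) ℂ ×
          Matrix (Fin k) (Fin k) ℂ × Matrix (Fin k) (Fin n) ℂ ×
          Matrix (Fin n) (Fin k) ℂ // IsCpbarConfig cfg} →
        {cfg : Matrix (Fin k) (Fin k) ℂ × Matrix (Fin k) (Fin k) ℂ ×
          Matrix (Fin k) (Fin k) ℂ × Matrix (Fin k) (Fin (2 * k) ⊕ Fin n) ℂ ×
          Matrix (Fin (2 * k) ⊕ Fin n) (Fin k) ℂ // IsCpbarConfig cfg},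
      Continuous H ∧
      (∀ a, (H (0, a)).val =
        (a.val.1, a.val.2.1, a.val.2.2.1,
          Matrix.fromCols (0 : Matrix (Fin k) (Fin (2 * k)) ℂ) a.val.2.2.2.1,
          Matrix.fromRows (0 : Matrix (Fin (2 * k)) (Fin k) ℂ) a.val.2.2.2.2)) ∧
      (∃ c₀, ∀ a, H (1, a) = c₀) := by
  refine ⟨fun y => ⟨_, aux_config y.2.val.1 y.2.val.2.1 y.2.val.2.2.1 y.2.val.2.2.2.1
    y.2.val.2.2.2.2 y.2.2 (((y.1 : ℝ) : ℂ))⟩, ?_, ?_, ?_⟩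
  · refine Continuous.subtype_mk ?_ _
    refine Continuous.prodMk (by fun_prop) (Continuous.prodMk (by fun_prop)
      (Continuous.prodMk (by fun_prop) (Continuous.prodMk ?_ ?_)))
    · exact aux_fromCols_cont (by fun_prop) (by fun_prop)
    · exact aux_fromRows_cont (by fun_prop) (by fun_prop)
  · intro a
    simp
  · refine ⟨⟨(0, 0, 0, fromCols (auxb k) 0, fromRows (auxc k) 0), ?_⟩,
      fun a => Subtype.ext ?_⟩
    · refine ⟨by simp [fromCols_mul_fromRows, auxb_mul_auxc], fun p q hp hq _ => ?_⟩
      apply aux_nondeg _ _ _ _ _ _ _ p q hp hq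
      · intro z
        obtain ⟨v, hv⟩ := auxb_surj k z
        refine ⟨Sum.elim v 0, ?_⟩
        dsimp only
        rw [fromCols_mulVec]
        simp [hv]
      · intro u hu
        dsimp only at hu
        rw [fromRows_mulVec] at hu
        apply auxc_inj
        ext i
        exact congrFun hu (Sum.inl i)
    · simp
end
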